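/- Let α ∈ (1,2), let X be a real Banach space, and let {T(t)}_{t>0} be a Riemann-Liouville α-order fractional cosine function on X. Then for every x ∈ X and all r,t > 0 there holds the symmetry identity (T(r) − (r^{α-2}/Γ(α-1)) I) J_t^α T(t)x = (T(t) − (t^{α-2}/Γ(α-1)) I) J_r^α T(r)x, where J_t^α T(t)x := (1/Γ(α)) ∫_0^t (t-σ)^{α-1} T(σ)x dσ. -/

import Mathlib

/-!
Write `S_γ(t) x = J_t^γ T(t)x` and `Q(t) = T(t) - (t^{α-2}/Γ(α-1)) I`. The claim is
`Q(r) S_α(t) = Q(t) S_α(r)`.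

Integrating the functional equation once more, either in `s` or in `t`, and subtracting the two
results yields (`cosine_integrated`)
`(S_{2-α}(a) - I) S_2(b) = S_2(a) (S_{2-α}(b) - I)`.
As `J^{2-α} Q = S_{2-α} - I` and `S_2 = J^{2-α} S_α`, cancelling the fractional integrals of order
`2 - α` in `a` and in `b` gives (`QOp_SOp`)
`Q(a) S_α(b) = S_α(a) Q(b)`.
It remains to commute `T(b)` with `S_α(a)`, which the functional equation does not provide directly:
its right side contains the products in one order only.

For the commutation, fractional integration of the last identity shows
`[S_{γ+α}(a), S_δ(b)] = [S_γ(a), S_{δ+α}(b)]` (`commutator_shift`), hence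
`[S_{(n+1)α}(a), S_α(b)] = [S_α(a), S_{(n+1)α}(b)]` for all `n`. With `b` fixed, `Γ((n+1)α)` times
the right side is `O(b^{nα})`, while the left side is an integral of order `(n+1)α`, up to `a`, of
`σ ↦ [T(σ), S_α(b)]`. A moment lemma of Phragmén-Mikusiński type (`integral_eq_zero_of_moments`)
forces that function to vanish on `(0, a - b)`. Since `a` is arbitrary, it vanishes everywhere
(`T_commute_SOp`).
-/

open MeasureTheory Filter Topology Set

/-- Riemann-Liouville fractional integral of order `β` of `f` at `t`:
`J_t^β f(t) = (1/Γ(β)) ∫_0^t (t-σ)^{β-1} f(σ) dσ`. -/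
noncomputable def RLint {X : Type*} [NormedAddCommGroup X] [NormedSpace ℝ X]
    (β t : ℝ) (f : ℝ → X) : X :=
  (Real.Gamma β)⁻¹ • ∫ σ in (0:ℝ)..t, (t - σ) ^ (β - 1) • f σ

/-- `{T(t)}_{t>0}` is a Riemann-Liouville `α`-order fractional cosine function. -/
def IsRLFracCosine {X : Type*} [NormedAddCommGroup X] [NormedSpace ℝ X]
    (α : ℝ) (T : ℝ → X →L[ℝ] X) : Prop :=
  (∀ x : X, ContinuousOn (fun t => T t x) (Set.Ioi (0:ℝ))) ∧
  (∀ x : X, Tendsto (fun t : ℝ => t ^ (2 - α) • T t x) (𝓝[>] (0:ℝ))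
      (𝓝 ((Real.Gamma (α - 1))⁻¹ • x))) ∧
  (∀ x : X, ∀ t > (0:ℝ), ∀ s > (0:ℝ),
    Real.Gamma (2 - α) • (∫ σ in (0:ℝ)..(t + s), T σ x) =
      (∫ σ in (0:ℝ)..t, ∫ τ in (0:ℝ)..s, (t - σ) ^ (1 - α) • T σ (T τ x)) +
      (∫ σ in (0:ℝ)..t, ∫ τ in (0:ℝ)..s, (s - τ) ^ (1 - α) • T σ (T τ x)) -
      (∫ σ in (0:ℝ)..t, ∫ τ in (0:ℝ)..s, (t + s - σ - τ) ^ (1 - α) • T σ (T τ x)))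

section Auxiliary

set_option linter.unusedSectionVars false

variable {X : Type*} [NormedAddCommGroup X] [NormedSpace ℝ X] [CompleteSpace X]

/-! ### Riemann-Liouville integrals of functions on the half-line -/

/-- Fubini's theorem for a vector function against a nonnegative kernel: integrability of the
product follows from integrability of `(∫ K) • p`, since the kernel is its own absolute value. -/
theorem integral_kernel_swap {S Z : Type*} [MeasurableSpace S] [MeasurableSpace Z]
    (μ : Measure S) (ν : Measure Z) [SFinite μ] [SFinite ν] {K : S → Z → ℝ} {p : Z → X}
    (hK : Measurable (Function.uncurry K)) (hK0 : ∀ᵐ z ∂ν, ∀ᵐ s ∂μ, 0 ≤ K s z)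
    (hKi : ∀ᵐ z ∂ν, Integrable (fun s => K s z) μ) (hp : AEStronglyMeasurable p ν)
    (hKp : Integrable (fun z => (∫ s, K s z ∂μ) • p z) ν) :
    Integrable (fun s => ∫ z, K s z • p z ∂ν) μ ∧
      ∫ s, ∫ z, K s z • p z ∂ν ∂μ = ∫ z, (∫ s, K s z ∂μ) • p z ∂ν := by
  have hprod : Integrable (fun q : S × Z => K q.1 q.2 • p q.2) (μ.prod ν) := by
    have hm : AEStronglyMeasurable (fun q : S × Z => K q.1 q.2 • p q.2) (μ.prod ν) :=
      AEStronglyMeasurable.smul hK.aestronglyMeasurable hp.comp_snd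
    rw [integrable_prod_iff' hm]
    constructor
    · filter_upwards [hKi] with z hz
      exact hz.smul_const _
    · refine hKp.norm.congr ?_
      filter_upwards [hK0, hKi] with z h0 hz
      have h1 : 0 ≤ ∫ s, K s z ∂μ := integral_nonneg_of_ae h0
      rw [norm_smul, Real.norm_of_nonneg h1, ← integral_mul_const]
      refine integral_congr_ae ?_
      filter_upwards [h0] with s hs
      simp only [norm_smul, Real.norm_of_nonneg hs]
  refine ⟨hprod.integral_prod_left, ?_⟩
  rw [integral_integral_swap hprod]
  refine integral_congr_ae (Eventually.of_forall fun z => ?_)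
  exact integral_smul_const _ _

/-- Functions on which Riemann-Liouville integrals are computed: continuous on `(0, ∞)` and
integrable at `0`. Values at `t ≤ 0` are irrelevant. -/
def Adm (f : ℝ → X) : Prop :=
  ContinuousOn f (Ioi 0) ∧ ∀ t > 0, IntervalIntegrable f volume 0 t

theorem Adm.kernel {f : ℝ → X} (hf : Adm f) {γ t : ℝ} (hγ : 0 < γ) (ht : 0 < t) :
    IntervalIntegrable (fun σ => (t - σ) ^ (γ - 1) • f σ) volume 0 t := by
  have h1 : IntervalIntegrable (fun σ => (t - σ) ^ (γ - 1) • f σ) volume 0 (t / 2) := by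
    refine (hf.2 (t / 2) (by linarith)).continuousOn_smul ?_
    intro σ hσ
    rw [uIcc_of_le (by linarith)] at hσ
    refine ContinuousAt.continuousWithinAt ?_
    refine ContinuousAt.rpow_const (by fun_prop) (Or.inl ?_)
    linarith [hσ.2]
  have h2 : IntervalIntegrable (fun σ => (t - σ) ^ (γ - 1) • f σ) volume (t / 2) t := by
    refine IntervalIntegrable.smul_continuousOn ?_ ?_
    · have := (intervalIntegral.intervalIntegrable_rpow' (r := γ - 1) (a := t / 2) (b := 0)
        (by linarith)).comp_sub_left t
      convert this using 1 <;> ring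
    · refine hf.1.mono fun σ hσ => ?_
      rw [uIcc_of_le (by linarith)] at hσ
      exact lt_of_lt_of_le (by linarith) hσ.1
  exact h1.trans h2

/-- Euler's beta integral, transported to the interval `[σ, t]`. -/
theorem beta_integral {γ δ σ t : ℝ} (hγ : 0 < γ) (hδ : 0 < δ) (hσ : σ < t) :
    IntervalIntegrable (fun s => (t - s) ^ (γ - 1) * (s - σ) ^ (δ - 1)) volume σ t ∧
    ∫ s in σ..t, (t - s) ^ (γ - 1) * (s - σ) ^ (δ - 1) =
      Real.Gamma γ * Real.Gamma δ / Real.Gamma (γ + δ) * (t - σ) ^ (γ + δ - 1) := by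
  have hA : 0 < t - σ := sub_pos.2 hσ
  have hadm : Adm (fun s : ℝ => s ^ (δ - 1)) := by
    refine ⟨fun s hs => (Real.continuousAt_rpow_const _ _ (Or.inl hs.ne')).continuousWithinAt,
      fun t _ => intervalIntegral.intervalIntegrable_rpow' (by linarith)⟩
  constructor
  · have := (hadm.kernel hγ hA).comp_sub_right σ
    convert this using 1
    · ext s; simp
    · simp
    · simp
  · have e1 : ∫ s in σ..t, (t - s) ^ (γ - 1) * (s - σ) ^ (δ - 1)
        = ∫ s in (0:ℝ)..(t - σ), s ^ (δ - 1) * ((t - σ) - s) ^ (γ - 1) := by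
      have := intervalIntegral.integral_comp_sub_right (a := σ) (b := t)
        (fun s => s ^ (δ - 1) * ((t - σ) - s) ^ (γ - 1)) σ
      rw [sub_self] at this
      rw [← this]
      refine intervalIntegral.integral_congr fun s _ => ?_
      rw [mul_comm]; congr 2; ring
    have e2 := Complex.betaIntegral_scaled (δ : ℂ) (γ : ℂ) hA
    have e3 : ((∫ s in (0:ℝ)..(t - σ), s ^ (δ - 1) * ((t - σ) - s) ^ (γ - 1) : ℝ) : ℂ) =
        ∫ x in (0:ℝ)..(t - σ), (x : ℂ) ^ ((δ:ℂ) - 1) * (((t - σ : ℝ) : ℂ) - x) ^ ((γ:ℂ) - 1) := by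
      rw [← intervalIntegral.integral_ofReal]
      refine intervalIntegral.integral_congr fun s hs => ?_
      rw [uIcc_of_le hA.le] at hs
      rw [Complex.ofReal_mul, Complex.ofReal_cpow hs.1, Complex.ofReal_cpow (sub_nonneg.2 hs.2)]
      push_cast; rfl
    rw [e1]
    have e4 := Complex.Gamma_mul_Gamma_eq_betaIntegral (s := (δ:ℂ)) (t := (γ:ℂ)) (by simpa) (by simpa)
    have hG : Real.Gamma (γ + δ) ≠ 0 := (Real.Gamma_pos_of_pos (by linarith)).ne'
    apply Complex.ofReal_injective
    rw [e3, e2]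
    have hG' : Complex.Gamma (δ + γ) ≠ 0 := by
      rw [← Complex.ofReal_add, Complex.Gamma_ofReal]
      rw [add_comm]; exact_mod_cast hG
    have e5 : Complex.betaIntegral δ γ = Complex.Gamma δ * Complex.Gamma γ / Complex.Gamma (δ + γ) := by
      rw [e4]; field_simp
    rw [e5]
    push_cast
    rw [Complex.ofReal_cpow hA.le]
    rw [← Complex.ofReal_add, Complex.Gamma_ofReal, Complex.Gamma_ofReal, Complex.Gamma_ofReal]
    push_cast
    rw [add_comm γ δ, add_comm (γ:ℂ) δ]
    ring

theorem Adm.aesm {f : ℝ → X} (hf : Adm f) (t : ℝ) (ht : 0 < t) :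
    AEStronglyMeasurable f (volume.restrict (Ioc 0 t)) :=
  ((intervalIntegrable_iff_integrableOn_Ioc_of_le ht.le).1 (hf.2 t ht)).aestronglyMeasurable

/-- The semigroup law `J^γ J^δ = J^{γ+δ}`, together with the integrability of the outer integrand. -/
theorem RLint_semigroup_aux {f : ℝ → X} (hf : Adm f) {γ δ t : ℝ} (hγ : 0 < γ) (hδ : 0 < δ)
    (ht : 0 < t) :
    IntervalIntegrable (fun s => (t - s) ^ (γ - 1) • RLint δ s f) volume 0 t ∧
    RLint γ t (fun s => RLint δ s f) = RLint (γ + δ) t f := by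
  set μ := (volume : Measure ℝ).restrict (Ioc 0 t) with hμ
  let K : ℝ → ℝ → ℝ := fun s σ => if σ ≤ s then (t - s) ^ (γ - 1) * (s - σ) ^ (δ - 1) else 0
  have hKm : Measurable (Function.uncurry K) := by
    refine Measurable.ite (measurableSet_le measurable_snd measurable_fst) ?_ measurable_const
    fun_prop
  have hKeq : ∀ σ, (fun s => K s σ) = (Ici σ).indicator
      (fun s => (t - s) ^ (γ - 1) * (s - σ) ^ (δ - 1)) := by
    intro σ; ext s; simp [K, indicator]
  have hset : ∀ σ ∈ Ioc 0 t, Ici σ ∩ Ioc 0 t = Icc σ t := by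
    intro σ hσ; ext s; simp only [mem_inter_iff, mem_Ici, mem_Ioc, mem_Icc]
    constructor
    · rintro ⟨h1, _, h3⟩; exact ⟨h1, h3⟩
    · rintro ⟨h1, h3⟩; exact ⟨h1, lt_of_lt_of_le hσ.1 h1, h3⟩
  have hae : ∀ᵐ σ ∂μ, σ ∈ Ioc 0 t := ae_restrict_mem measurableSet_Ioc
  have hne : ∀ᵐ σ ∂μ, σ ≠ t := ae_restrict_of_ae (by simp [ae_iff])
  have hKint : ∀ᵐ σ ∂μ, Integrable (fun s => K s σ) μ := by
    filter_upwards [hae, hne] with σ hσ hn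
    rw [hKeq, integrable_indicator_iff measurableSet_Ici, IntegrableOn, hμ,
      Measure.restrict_restrict measurableSet_Ici, hset σ hσ]
    have := (beta_integral hγ hδ (lt_of_le_of_ne hσ.2 hn)).1
    exact (intervalIntegrable_iff_integrableOn_Icc_of_le hσ.2).1 this
  have hKval : ∀ᵐ σ ∂μ, ∫ s, K s σ ∂μ =
      Real.Gamma γ * Real.Gamma δ / Real.Gamma (γ + δ) * (t - σ) ^ (γ + δ - 1) := by
    filter_upwards [hae, hne] with σ hσ hn
    rw [hKeq, integral_indicator measurableSet_Ici, hμ,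
      Measure.restrict_restrict measurableSet_Ici, hset σ hσ,
      ← (beta_integral hγ hδ (lt_of_le_of_ne hσ.2 hn)).2, integral_Icc_eq_integral_Ioc,
      intervalIntegral.integral_of_le hσ.2]
  have hK0 : ∀ᵐ σ ∂μ, ∀ᵐ s ∂μ, 0 ≤ K s σ := by
    refine Eventually.of_forall fun σ => ?_
    filter_upwards [hae] with s hs
    simp only [K]
    split_ifs with h
    · exact mul_nonneg (Real.rpow_nonneg (sub_nonneg.2 hs.2) _)
        (Real.rpow_nonneg (sub_nonneg.2 h) _)
    · exact le_rfl
  have hKp : Integrable (fun σ => (∫ s, K s σ ∂μ) • f σ) μ := by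
    have h := (intervalIntegrable_iff_integrableOn_Ioc_of_le ht.le).1
      (hf.kernel (add_pos hγ hδ) ht)
    refine (h.smul (Real.Gamma γ * Real.Gamma δ / Real.Gamma (γ + δ))).congr ?_
    filter_upwards [hKval] with σ hσ
    simp [hσ, mul_smul]
  have key := integral_kernel_swap μ μ hKm hK0 hKint (hf.aesm t ht) hKp
  have hinner : ∀ s ∈ Ioc 0 t, ∫ σ, K s σ • f σ ∂μ =
      Real.Gamma δ • (t - s) ^ (γ - 1) • RLint δ s f := by
    intro s hs
    have e : (fun σ => K s σ • f σ) = (Iic s).indicator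
        (fun σ => (t - s) ^ (γ - 1) • (s - σ) ^ (δ - 1) • f σ) := by
      ext σ; simp only [K, indicator, mem_Iic]; split_ifs <;> simp [mul_smul]
    have e2 : Iic s ∩ Ioc 0 t = Ioc 0 s := by
      ext σ; simp only [mem_inter_iff, mem_Iic, mem_Ioc]
      constructor
      · rintro ⟨h1, h2, _⟩; exact ⟨h2, h1⟩
      · rintro ⟨h1, h2⟩; exact ⟨h2, h1, h2.trans hs.2⟩
    rw [e, integral_indicator measurableSet_Iic, hμ, Measure.restrict_restrict measurableSet_Iic,
      e2, integral_smul, RLint, intervalIntegral.integral_of_le hs.1.le, smul_comm (Real.Gamma δ),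
      smul_smul (Real.Gamma δ), mul_inv_cancel₀ (Real.Gamma_pos_of_pos hδ).ne', one_smul]
  have hGδ := (Real.Gamma_pos_of_pos hδ).ne'
  have hGγ := (Real.Gamma_pos_of_pos hγ).ne'
  have hG := (Real.Gamma_pos_of_pos (add_pos hγ hδ)).ne'
  constructor
  · rw [intervalIntegrable_iff_integrableOn_Ioc_of_le ht.le]
    refine (key.1.smul (Real.Gamma δ)⁻¹).congr ?_
    filter_upwards [hae] with s hs
    simp only [Pi.smul_apply]
    rw [hinner s hs, smul_smul, inv_mul_cancel₀ hGδ, one_smul]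
  · have h1 : ∫ s, ∫ σ, K s σ • f σ ∂μ ∂μ =
        Real.Gamma δ • ∫ s in (0:ℝ)..t, (t - s) ^ (γ - 1) • RLint δ s f := by
      rw [intervalIntegral.integral_of_le ht.le, ← integral_smul]
      refine integral_congr_ae ?_
      filter_upwards [hae] with s hs
      exact hinner s hs
    have h2 : ∫ σ, (∫ s, K s σ ∂μ) • f σ ∂μ =
        (Real.Gamma γ * Real.Gamma δ / Real.Gamma (γ + δ)) •
          ∫ σ in (0:ℝ)..t, (t - σ) ^ (γ + δ - 1) • f σ := by
      rw [intervalIntegral.integral_of_le ht.le, ← integral_smul]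
      refine integral_congr_ae ?_
      filter_upwards [hKval] with σ hσ
      rw [hσ, mul_smul]
    have h3 := key.2
    rw [h1, h2] at h3
    have h4 : ∫ s in (0:ℝ)..t, (t - s) ^ (γ - 1) • RLint δ s f =
        (Real.Gamma γ / Real.Gamma (γ + δ)) •
          ∫ σ in (0:ℝ)..t, (t - σ) ^ (γ + δ - 1) • f σ := by
      have := congrArg (fun v => (Real.Gamma δ)⁻¹ • v) h3
      simp only [smul_smul, inv_mul_cancel₀ hGδ, one_smul] at this
      rw [this]; congr 1; field_simp
    rw [RLint, h4, smul_smul, RLint]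
    congr 1; field_simp

theorem Adm.sub {f g : ℝ → X} (hf : Adm f) (hg : Adm g) : Adm (fun t => f t - g t) :=
  ⟨hf.1.sub hg.1, fun t ht => (hf.2 t ht).sub (hg.2 t ht)⟩

theorem Adm.clm {f : ℝ → X} (hf : Adm f) (L : X →L[ℝ] X) : Adm (fun t => L (f t)) := by
  refine ⟨L.continuous.comp_continuousOn hf.1, fun t ht => ?_⟩
  have h := hf.2 t ht
  rw [intervalIntegrable_iff] at h ⊢
  exact L.integrable_comp h

theorem Adm.rpow {γ : ℝ} (hγ : 0 < γ) (y : X) : Adm (fun t => (t ^ (γ - 1) / Real.Gamma γ) • y) := by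
  refine ⟨?_, fun t _ => ?_⟩
  · intro t ht
    refine ContinuousAt.continuousWithinAt ?_
    exact ((Real.continuousAt_rpow_const _ _ (Or.inl (ne_of_gt ht))).div_const _).smul_const y
  · have h := (intervalIntegral.intervalIntegrable_rpow' (r := γ - 1) (a := 0) (b := t)
      (by linarith)).div_const (Real.Gamma γ)
    rw [intervalIntegrable_iff] at h ⊢
    exact Integrable.smul_const h y

theorem RLint_one (t : ℝ) (f : ℝ → X) : RLint 1 t f = ∫ s in (0:ℝ)..t, f s := by
  simp [RLint]

theorem RLint_congr {γ t : ℝ} (ht : 0 < t) {f g : ℝ → X} (h : ∀ s > 0, f s = g s) :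
    RLint γ t f = RLint γ t g := by
  unfold RLint
  congr 1
  rw [intervalIntegral.integral_of_le ht.le, intervalIntegral.integral_of_le ht.le]
  refine setIntegral_congr_fun measurableSet_Ioc fun s hs => ?_
  simp only [h s hs.1]

theorem RLint_semigroup {f : ℝ → X} (hf : Adm f) {γ δ t : ℝ} (hγ : 0 < γ) (hδ : 0 < δ)
    (ht : 0 < t) : RLint γ t (fun s => RLint δ s f) = RLint (γ + δ) t f :=
  (RLint_semigroup_aux hf hγ hδ ht).2

theorem RLint_sub {f g : ℝ → X} (hf : Adm f) (hg : Adm g) {γ t : ℝ} (hγ : 0 < γ) (ht : 0 < t) :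
    RLint γ t (fun s => f s - g s) = RLint γ t f - RLint γ t g := by
  unfold RLint
  rw [← smul_sub, ← intervalIntegral.integral_sub (hf.kernel hγ ht) (hg.kernel hγ ht)]
  simp only [smul_sub]

theorem RLint_clm {f : ℝ → X} (hf : Adm f) (L : X →L[ℝ] X) {γ t : ℝ} (hγ : 0 < γ) (ht : 0 < t) :
    RLint γ t (fun s => L (f s)) = L (RLint γ t f) := by
  unfold RLint
  rw [map_smul, ← L.intervalIntegral_comp_comm (hf.kernel hγ ht)]
  simp only [map_smul]

theorem RLint_rpow {γ δ t : ℝ} (hγ : 0 < γ) (hδ : 0 < δ) (ht : 0 < t) (y : X) :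
    RLint γ t (fun s => (s ^ (δ - 1) / Real.Gamma δ) • y) =
      (t ^ (γ + δ - 1) / Real.Gamma (γ + δ)) • y := by
  have h := (beta_integral hγ hδ ht).2
  have hGδ := (Real.Gamma_pos_of_pos hδ).ne'
  have hGγ := (Real.Gamma_pos_of_pos hγ).ne'
  have e : ∫ s in (0:ℝ)..t, (t - s) ^ (γ - 1) • (s ^ (δ - 1) / Real.Gamma δ) • y =
      ((∫ s in (0:ℝ)..t, (t - s) ^ (γ - 1) * (s - 0) ^ (δ - 1)) / Real.Gamma δ) • y := by
    rw [← intervalIntegral.integral_div, ← intervalIntegral.integral_smul_const]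
    refine intervalIntegral.integral_congr fun s _ => ?_
    simp only [smul_smul, sub_zero]
    congr 1; ring
  rw [RLint, e, h, smul_smul]
  congr 1
  rw [sub_zero]
  field_simp

theorem RLint_intervalIntegrable {f : ℝ → X} (hf : Adm f) {γ t : ℝ} (hγ : 0 < γ) (ht : 0 < t) :
    IntervalIntegrable (fun s => RLint γ s f) volume 0 t := by
  simpa using (RLint_semigroup_aux hf one_pos hγ ht).1

/-- The primitive of `J^γ f` is `J^{γ+1} f`. -/
theorem RLint_integral {f : ℝ → X} (hf : Adm f) {γ t : ℝ} (hγ : 0 < γ) (ht : 0 < t) :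
    ∫ s in (0:ℝ)..t, RLint γ s f = RLint (γ + 1) t f := by
  rw [← RLint_one, RLint_semigroup hf one_pos hγ ht, add_comm]

theorem continuousOn_Ioi_primitive {g : ℝ → X}
    (hg : ∀ t > 0, IntervalIntegrable g volume 0 t) :
    ContinuousOn (fun t => ∫ s in (0:ℝ)..t, g s) (Ioi 0) := by
  intro t ht
  have ht' : (0:ℝ) < t := ht
  have h := hg (t + 1) (by linarith)
  have hc := intervalIntegral.continuousOn_primitive_interval' h left_mem_uIcc
  have : uIcc (0:ℝ) (t + 1) ∈ 𝓝 t := by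
    rw [uIcc_of_le (by linarith)]
    exact Icc_mem_nhds ht' (by linarith)
  exact (hc.continuousAt this).continuousWithinAt

theorem RLint_continuousOn {f : ℝ → X} (hf : Adm f) {γ : ℝ} (hγ : 1 < γ) :
    ContinuousOn (fun t => RLint γ t f) (Ioi 0) := by
  refine (continuousOn_Ioi_primitive (g := fun s => RLint (γ - 1) s f) fun t ht =>
    RLint_intervalIntegrable hf (by linarith) ht).congr fun t ht => ?_
  simp only [RLint_integral hf (sub_pos.2 hγ) ht, sub_add_cancel]

/-- A function that is continuous on `(0, c)` and integrable at `0` is determined there by its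
primitive. -/
theorem eq_of_primitive_eq {f g : ℝ → X} {c : ℝ} (hf : ContinuousOn f (Ioo 0 c))
    (hg : ContinuousOn g (Ioo 0 c))
    (hfi : ∀ t ∈ Ioo 0 c, IntervalIntegrable f volume 0 t)
    (hgi : ∀ t ∈ Ioo 0 c, IntervalIntegrable g volume 0 t)
    (h : ∀ t ∈ Ioo 0 c, ∫ s in (0:ℝ)..t, f s = ∫ s in (0:ℝ)..t, g s) :
    ∀ t ∈ Ioo 0 c, f t = g t := by
  intro t ht
  have hn : Ioo 0 c ∈ 𝓝 t := isOpen_Ioo.mem_nhds ht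
  have h1 := intervalIntegral.integral_hasDerivAt_right (hfi t ht)
    (hf.stronglyMeasurableAtFilter isOpen_Ioo t ht) (hf.continuousAt hn)
  have h2 := intervalIntegral.integral_hasDerivAt_right (hgi t ht)
    (hg.stronglyMeasurableAtFilter isOpen_Ioo t ht) (hg.continuousAt hn)
  refine h1.unique (h2.congr_of_eventuallyEq ?_)
  filter_upwards [hn] with u hu using h u hu

/-- Injectivity of `J^β`: a common fractional integral of order `β < 1` may be cancelled. Applying
`J^{1-β}` turns the hypothesis into an equality of primitives. -/
theorem RLint_cancel {f g : ℝ → X} (hf : Adm f) (hg : Adm g) {β γ : ℝ} (hβ : β ∈ Ioo (0:ℝ) 1)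
    (hγ : 1 < γ) (h : ∀ t > 0, RLint β t f = RLint (β + γ) t g) :
    ∀ t > 0, f t = RLint γ t g := by
  intro t ht
  refine eq_of_primitive_eq (c := t + 1) (hf.1.mono fun s hs => hs.1)
    ((RLint_continuousOn hg hγ).mono fun s hs => hs.1) (fun s hs => hf.2 s hs.1)
    (fun s hs => RLint_intervalIntegrable hg (by linarith) hs.1) ?_ t ⟨ht, by linarith⟩
  intro s hs
  have h1 : RLint (1 - β) s (fun u => RLint β u f) = RLint (1 - β) s (fun u => RLint (β + γ) u g) :=
    RLint_congr hs.1 h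
  rw [RLint_semigroup hf (by linarith [hβ.2]) hβ.1 hs.1,
    RLint_semigroup hg (by linarith [hβ.2]) (by linarith [hβ.1]) hs.1] at h1
  rw [RLint_integral hg (by linarith) hs.1, ← RLint_one]
  convert h1 using 2 <;> ring

/-! ### A vector-valued Phragmén-Mikusiński moment lemma -/

/-- If the moments of `ψ` with respect to `θ` grow at most like `B ^ n`, then `ψ` has zero integral
over `{c < θ}` for every `c > B`. Indeed `1 - exp (-(θ / c) ^ N)` converges boundedly to the
indicator of `{c < θ}` as `N → ∞`, while expanding the exponential and inserting the moment bounds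
gives `‖∫ (1 - exp (-(θ / c) ^ N)) • ψ‖ ≤ C (exp ((B / c) ^ N) - 1) → 0`. -/
theorem integral_eq_zero_of_moments {Ω : Type*} [MeasurableSpace Ω] {μ : Measure Ω}
    {ψ : Ω → X} (hψ : Integrable ψ μ) {θ : Ω → ℝ} (hθ : Measurable θ) {A B C c : ℝ}
    (hθ0 : ∀ᵐ ω ∂μ, 0 ≤ θ ω ∧ θ ω ≤ A)
    (hmom : ∀ n : ℕ, ‖∫ ω, θ ω ^ n • ψ ω ∂μ‖ ≤ C * B ^ n)
    (hB : 0 ≤ B) (hBc : B < c) (hc : ∀ᵐ ω ∂μ, θ ω ≠ c) :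
    ∫ ω in {ω | c < θ ω}, ψ ω ∂μ = 0 := by
  have hc0 : 0 < c := hB.trans_lt hBc
  let Φ : ℕ → X := fun N => ∫ ω, (1 - Real.exp (-(θ ω / c) ^ N)) • ψ ω ∂μ
  have lim1 : Tendsto Φ atTop (𝓝 (∫ ω in {ω | c < θ ω}, ψ ω ∂μ)) := by
    rw [← integral_indicator (measurableSet_lt measurable_const hθ)]
    refine tendsto_integral_of_dominated_convergence (fun ω => ‖ψ ω‖) ?_ hψ.norm ?_ ?_
    · intro N
      refine AEStronglyMeasurable.smul ?_ hψ.aestronglyMeasurable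
      exact (by fun_prop : Measurable fun ω => 1 - Real.exp (-(θ ω / c) ^ N)).aestronglyMeasurable
    · intro N
      filter_upwards [hθ0] with ω hω
      rw [norm_smul]
      refine mul_le_of_le_one_left (norm_nonneg _) ?_
      have h0 : 0 ≤ (θ ω / c) ^ N := pow_nonneg (div_nonneg hω.1 hc0.le) _
      have h1 : Real.exp (-(θ ω / c) ^ N) ≤ 1 := Real.exp_le_one_iff.2 (by linarith)
      have h2 := Real.exp_pos (-(θ ω / c) ^ N)
      rw [Real.norm_eq_abs, abs_le]; constructor <;> linarith
    · filter_upwards [hθ0, hc] with ω hω hne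
      rcases lt_or_gt_of_ne hne with h | h
      · have hn : ω ∉ {ω | c < θ ω} := by simp [h.le]
        rw [indicator_of_notMem hn]
        have : Tendsto (fun N : ℕ => (θ ω / c) ^ N) atTop (𝓝 0) :=
          tendsto_pow_atTop_nhds_zero_of_lt_one (div_nonneg hω.1 hc0.le) ((div_lt_one hc0).2 h)
        have h2 := ((Real.continuous_exp.tendsto _).comp this.neg).const_sub 1
        simpa using h2.smul_const (ψ ω)
      · have hn : ω ∈ {ω | c < θ ω} := h
        rw [indicator_of_mem hn]
        have : Tendsto (fun N : ℕ => (θ ω / c) ^ N) atTop atTop :=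
          tendsto_pow_atTop_atTop_of_one_lt ((one_lt_div hc0).2 h)
        have h2 := (Real.tendsto_exp_neg_atTop_nhds_zero.comp this).const_sub 1
        simpa using h2.smul_const (ψ ω)
  have hbd : ∀ N : ℕ, ‖Φ N‖ ≤ C * (Real.exp ((B / c) ^ N) - 1) := by
    intro N
    let F : ℕ → Ω → X := fun k ω =>
      (-(((-(θ ω / c) ^ N) ^ (k + 1)) / ((k + 1).factorial : ℝ))) • ψ ω
    have hF : ∀ k, ∫ ω, F k ω ∂μ =
        (-((-1) ^ (k + 1) * (c⁻¹ ^ (N * (k + 1))) / ((k + 1).factorial : ℝ))) •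
          ∫ ω, θ ω ^ (N * (k + 1)) • ψ ω ∂μ := by
      intro k
      rw [← integral_smul]
      refine integral_congr_ae (Eventually.of_forall fun ω => ?_)
      simp only [F, smul_smul]
      congr 1
      rw [neg_pow, ← pow_mul, div_eq_mul_inv (θ ω), mul_pow]
      ring
    have exps : ∀ y : ℝ, HasSum (fun k : ℕ => y ^ (k + 1) / ((k + 1).factorial : ℝ))
        (Real.exp y - 1) := by
      intro y
      have h := NormedSpace.expSeries_div_hasSum_exp (𝔸 := ℝ) y
      rw [← Real.exp_eq_exp_ℝ] at h
      have := (hasSum_nat_add_iff' 1).2 h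
      simpa using this
    have hsum : HasSum (fun k => ∫ ω, F k ω ∂μ) (Φ N) := by
      refine hasSum_integral_of_dominated_convergence
        (fun k ω => (((A / c) ^ N) ^ (k + 1) / ((k + 1).factorial : ℝ)) * ‖ψ ω‖) ?_ ?_ ?_ ?_ ?_
      · intro k
        refine AEStronglyMeasurable.smul ?_ hψ.aestronglyMeasurable
        exact (by fun_prop : Measurable fun ω =>
          (-(((-(θ ω / c) ^ N) ^ (k + 1)) / ((k + 1).factorial : ℝ)))).aestronglyMeasurable
      · intro k
        filter_upwards [hθ0] with ω hω
        have h0 : 0 ≤ θ ω / c := div_nonneg hω.1 hc0.le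
        have h1 : θ ω / c ≤ A / c := div_le_div_of_nonneg_right hω.2 hc0.le
        rw [norm_smul, norm_neg, norm_div, norm_pow, norm_neg, norm_pow, Real.norm_of_nonneg h0,
          Real.norm_natCast]
        gcongr
      · exact Eventually.of_forall fun ω => ((exps _).mul_right _).summable
      · have : (fun ω => ∑' k : ℕ, ((A / c) ^ N) ^ (k + 1) / ((k + 1).factorial : ℝ) * ‖ψ ω‖) =
            fun ω => (Real.exp ((A / c) ^ N) - 1) * ‖ψ ω‖ := by
          ext ω; exact ((exps _).mul_right _).tsum_eq
        rw [this]
        exact hψ.norm.const_mul _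
      · refine Eventually.of_forall fun ω => ?_
        have := ((exps (-(θ ω / c) ^ N)).neg).smul_const (ψ ω)
        simpa [F] using this
    refine hsum.norm_le_of_bounded ((exps ((B / c) ^ N)).mul_left C) fun k => ?_
    rw [hF, norm_smul]
    refine (mul_le_mul_of_nonneg_left (hmom _) (norm_nonneg _)).trans (le_of_eq ?_)
    rw [norm_neg, norm_div, norm_mul, norm_pow, norm_pow, norm_neg, norm_one, one_pow, one_mul,
      Real.norm_natCast, Real.norm_of_nonneg (inv_nonneg.2 hc0.le), ← pow_mul,
      div_eq_mul_inv B, mul_pow]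
    ring
  have lim2 : Tendsto Φ atTop (𝓝 0) := by
    refine squeeze_zero_norm hbd ?_
    have : Tendsto (fun N : ℕ => (B / c) ^ N) atTop (𝓝 0) :=
      tendsto_pow_atTop_nhds_zero_of_lt_one (div_nonneg hB hc0.le) ((div_lt_one hc0).2 hBc)
    have h2 := (((Real.continuous_exp.tendsto _).comp this).sub_const 1).const_mul C
    simpa using h2
  exact tendsto_nhds_unique lim1 lim2

/-- If the unnormalized integrals of orders `(n + 1) α` of `φ` up to `a` grow in `n` at most like
`(b ^ α) ^ n`, with the same `b` for all `a`, then `φ` vanishes. The moment lemma with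
`θ σ = (a - σ) ^ α` shows that `φ` vanishes on `(0, a - b)`, and `a` is arbitrary. -/
theorem eq_zero_of_RLint_bound {φ : ℝ → X} (hφ : Adm φ) {α b : ℝ} (hα : 1 < α) (hb : 0 < b)
    (h : ∀ a > 0, ∃ C, ∀ n : ℕ,
      ‖∫ σ in (0:ℝ)..a, (a - σ) ^ ((n + 1) * α - 1) • φ σ‖ ≤ C * (b ^ α) ^ n) :
    ∀ σ > 0, φ σ = 0 := by
  intro σ₀ hσ₀
  -- any `a > σ₀ + b` puts `σ₀` into the interval `(0, a - b)`
  set a := σ₀ + b + 1 with ha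
  have ha0 : 0 < a := by linarith
  obtain ⟨C, hC⟩ := h a ha0
  let ψ : ℝ → X := fun σ => (a - σ) ^ (α - 1) • φ σ
  have hψi : IntervalIntegrable ψ volume 0 a := hφ.kernel (by linarith) ha0
  have hψ : Integrable ψ (volume.restrict (Ioc 0 a)) :=
    (intervalIntegrable_iff_integrableOn_Ioc_of_le ha0.le).1 hψi
  have hae : ∀ᵐ σ ∂(volume.restrict (Ioc 0 a)), σ ∈ Ioc 0 a := ae_restrict_mem measurableSet_Ioc
  have hzero : ∀ t ∈ Ioo 0 (a - b), ∫ s in (0:ℝ)..t, ψ s = 0 := by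
    intro t ht
    have hbt : b < a - t := by linarith [ht.2]
    have key := integral_eq_zero_of_moments hψ (θ := fun σ => (a - σ) ^ α) (by fun_prop)
      (A := a ^ α) (B := b ^ α) (C := C) (c := (a - t) ^ α) ?_ ?_ (by positivity)
      (Real.rpow_lt_rpow hb.le hbt (by linarith)) ?_
    · rw [Measure.restrict_restrict
        (measurableSet_lt measurable_const (by fun_prop : Measurable fun σ : ℝ => (a - σ) ^ α))]
        at key
      rw [intervalIntegral.integral_of_le ht.1.le, integral_Ioc_eq_integral_Ioo, ← key]
      congr 2
      ext σ
      simp only [mem_Ioo, mem_inter_iff, mem_ofPred_eq, mem_Ioc]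
      constructor
      · rintro ⟨h1, h2⟩
        exact ⟨Real.rpow_lt_rpow (by linarith) (by linarith) (by linarith), h1,
          by linarith⟩
      · rintro ⟨h1, h2, h3⟩
        refine ⟨h2, ?_⟩
        have := (Real.rpow_lt_rpow_iff (by linarith) (by linarith) (by linarith)).1 h1
        linarith
    · filter_upwards [hae] with σ hσ
      exact ⟨Real.rpow_nonneg (by linarith [hσ.2]) _,
        Real.rpow_le_rpow (by linarith [hσ.2]) (by linarith [hσ.1]) (by linarith)⟩
    · intro n
      convert hC n using 2
      rw [intervalIntegral.integral_of_le ha0.le]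
      refine setIntegral_congr_fun measurableSet_Ioc fun σ hσ => ?_
      have h0 : 0 ≤ a - σ := by linarith [hσ.2]
      simp only [ψ, smul_smul]
      congr 1
      rw [← Real.rpow_mul_natCast h0, ← Real.rpow_add_of_nonneg h0 (by positivity) (by linarith)]
      congr 1; ring
    · have hne : ∀ᵐ σ ∂(volume.restrict (Ioc 0 a)), σ ≠ t := ae_restrict_of_ae (by simp [ae_iff])
      filter_upwards [hae, hne] with σ hσ hn heq
      have := (Real.rpow_left_inj (by linarith [hσ.2]) (by linarith) (by linarith)).1 heq
      exact hn (by linarith)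
  have hcont : ContinuousOn ψ (Ioo 0 (a - b)) := by
    intro σ hσ
    have : ContinuousAt (fun σ : ℝ => (a - σ) ^ (α - 1)) σ :=
      ContinuousAt.rpow_const (by fun_prop) (Or.inl (by linarith [hσ.2]))
    exact this.continuousWithinAt.smul ((hφ.1 σ hσ.1).mono fun s hs => hs.1)
  have hz := eq_of_primitive_eq (g := fun _ => (0:X)) (c := a - b) hcont continuousOn_const
    (fun t ht => hψi.mono_set (by
      rw [uIcc_of_le ht.1.le, uIcc_of_le ha0.le]
      exact Icc_subset_Icc_right (by linarith [ht.2])))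
    (fun t ht => intervalIntegrable_const) (fun t ht => by simp [hzero t ht]) σ₀
    ⟨hσ₀, by linarith⟩
  have hpos : (a - σ₀) ^ (α - 1) ≠ 0 := (Real.rpow_pos_of_pos (by linarith) _).ne'
  exact (smul_eq_zero.1 hz).resolve_left hpos

/-! ### The operators attached to a fractional cosine function -/

section Cosine

variable {α : ℝ} {T : ℝ → X →L[ℝ] X}

/-- Uniform boundedness principle: `‖T σ‖ = O(σ ^ (α - 2))` on `(0, a]`. -/
theorem norm_bound (hT : IsRLFracCosine α T) {a : ℝ} :
    ∃ M, 0 ≤ M ∧ ∀ σ ∈ Ioc 0 a, ∀ y, ‖T σ y‖ ≤ M * σ ^ (α - 2) * ‖y‖ := by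
  have hpt : ∀ y : X, ∃ C, ∀ i : Ioc (0:ℝ) a, ‖(((i : ℝ) ^ (2 - α)) • T i) y‖ ≤ C := by
    intro y
    -- the weighted orbit extends continuously to the compact interval `[0, a]`
    have hc : ContinuousOn (Function.update (fun t : ℝ => t ^ (2 - α) • T t y) 0
        ((Real.Gamma (α - 1))⁻¹ • y)) (Icc 0 a) := by
      intro t ht
      rcases ht.1.eq_or_lt with h0 | h0
      · rw [← h0, continuousWithinAt_update_same]
        refine (hT.2.1 y).mono_left (nhdsWithin_mono _ ?_)
        rintro s ⟨hs, hne⟩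
        exact lt_of_le_of_ne hs.1 (Ne.symm hne)
      · rw [continuousWithinAt_update_of_ne h0.ne']
        refine ContinuousAt.continuousWithinAt ?_
        exact (Real.continuousAt_rpow_const _ _ (Or.inl h0.ne')).smul
          ((hT.1 y).continuousAt (Ioi_mem_nhds h0))
    obtain ⟨C, hC⟩ := isCompact_Icc.exists_bound_of_continuousOn hc
    refine ⟨C, fun i => ?_⟩
    have := hC i ⟨i.2.1.le, i.2.2⟩
    rwa [Function.update_of_ne i.2.1.ne'] at this
  obtain ⟨M, hM⟩ := banach_steinhaus hpt
  refine ⟨max M 0, le_max_right _ _, fun σ hσ y => ?_⟩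
  have h1 := (((σ ^ (2 - α)) • T σ).le_opNorm y).trans
    (mul_le_mul_of_nonneg_right ((hM ⟨σ, hσ⟩).trans (le_max_left M 0)) (norm_nonneg y))
  rw [smul_apply, norm_smul,
    Real.norm_of_nonneg (Real.rpow_nonneg hσ.1.le _)] at h1
  have h2 : σ ^ (α - 2) * σ ^ (2 - α) = 1 := by
    rw [← Real.rpow_add hσ.1]; simp
  have h3 : 0 ≤ σ ^ (α - 2) := Real.rpow_nonneg hσ.1.le _
  calc ‖T σ y‖ = σ ^ (α - 2) * (σ ^ (2 - α) * ‖T σ y‖) := by rw [← mul_assoc, h2, one_mul]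
    _ ≤ σ ^ (α - 2) * (max M 0 * ‖y‖) := mul_le_mul_of_nonneg_left h1 h3
    _ = _ := by ring

theorem Adm_rpow_scalar (hα : 1 < α) : Adm (fun σ : ℝ => σ ^ (α - 2)) := by
  refine ⟨fun s hs => (Real.continuousAt_rpow_const _ _ (Or.inl hs.ne')).continuousWithinAt,
      fun t _ => intervalIntegral.intervalIntegrable_rpow' (by linarith)⟩

theorem Adm_orbit (hα : 1 < α) (hT : IsRLFracCosine α T) (y : X) : Adm (fun t => T t y) := by
  refine ⟨hT.1 y, fun t ht => ?_⟩
  obtain ⟨M, _, hM⟩ := norm_bound hT (a := t)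
  rw [intervalIntegrable_iff_integrableOn_Ioc_of_le ht.le]
  have hi := (intervalIntegrable_iff_integrableOn_Ioc_of_le ht.le).1 ((Adm_rpow_scalar hα).2 t ht)
  refine ((hi.const_mul M).mul_const ‖y‖).mono'
    (((hT.1 y).mono fun s hs => hs.1).aestronglyMeasurable measurableSet_Ioc) ?_
  filter_upwards [ae_restrict_mem measurableSet_Ioc] with σ hσ using hM σ hσ y

/-- The map `y ↦ J^γ (T(·) y)(t)` is a bounded operator. -/
theorem exists_clm (hα : 1 < α) (hT : IsRLFracCosine α T) {γ t : ℝ} (hγ : 0 < γ) (ht : 0 < t) :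
    ∃ L : X →L[ℝ] X, ∀ y, L y = RLint γ t (fun σ => T σ y) := by
  obtain ⟨M, hM0, hM⟩ := norm_bound hT (a := t)
  let L₀ : X →ₗ[ℝ] X :=
    { toFun := fun y => RLint γ t (fun σ => T σ y)
      map_add' := fun y z => by
        unfold RLint
        rw [← smul_add, ← intervalIntegral.integral_add ((Adm_orbit hα hT y).kernel hγ ht)
          ((Adm_orbit hα hT z).kernel hγ ht)]
        simp only [map_add, smul_add]
      map_smul' := fun c y => by
        simp only [RLint, map_smul, RingHom.id_apply]
        simp only [smul_comm _ c, intervalIntegral.integral_smul] }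
  refine ⟨L₀.mkContinuous (|(Real.Gamma γ)⁻¹| *
    (∫ σ in (0:ℝ)..t, (t - σ) ^ (γ - 1) * (M * σ ^ (α - 2)))) fun y => ?_, fun y => rfl⟩
  change ‖RLint γ t (fun σ => T σ y)‖ ≤ _
  rw [RLint, norm_smul, Real.norm_eq_abs, mul_assoc]
  refine mul_le_mul_of_nonneg_left ?_ (abs_nonneg _)
  rw [← intervalIntegral.integral_mul_const]
  refine intervalIntegral.norm_integral_le_of_norm_le ht.le ?_ ?_
  · refine Eventually.of_forall fun σ hσ => ?_
    have h0 : 0 ≤ (t - σ) ^ (γ - 1) := Real.rpow_nonneg (by linarith [hσ.2]) _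
    rw [norm_smul, Real.norm_of_nonneg h0, mul_assoc]
    exact mul_le_mul_of_nonneg_left (hM σ hσ y) h0
  · have h := ((Adm_rpow_scalar hα).kernel hγ ht).const_mul M |>.mul_const ‖y‖
    refine h.congr_ae (Eventually.of_forall fun σ => ?_)
    simp only [smul_eq_mul]; ring

theorem norm_RLint_le (hα : 1 < α) (hT : IsRLFracCosine α T) {γ t : ℝ} (hγ : 1 ≤ γ) (ht : 0 < t)
    (y : X) : ‖∫ σ in (0:ℝ)..t, (t - σ) ^ (γ - 1) • T σ y‖ ≤
      t ^ (γ - 1) * ∫ σ in (0:ℝ)..t, ‖T σ y‖ := by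
  rw [← intervalIntegral.integral_const_mul]
  refine intervalIntegral.norm_integral_le_of_norm_le ht.le ?_
    (((Adm_orbit hα hT y).2 t ht).norm.const_mul _)
  refine Eventually.of_forall fun σ hσ => ?_
  have h0 : 0 ≤ (t - σ) ^ (γ - 1) := Real.rpow_nonneg (by linarith [hσ.2]) _
  rw [norm_smul, Real.norm_of_nonneg h0]
  refine mul_le_mul_of_nonneg_right ?_ (norm_nonneg _)
  exact Real.rpow_le_rpow (by linarith [hσ.2]) (by linarith [hσ.1]) (by linarith)

/-- The bounded operator `S_γ(t) : y ↦ J^γ (T(·) y)(t)`; it takes the value `0` in case that map is not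
a bounded linear operator, which cannot occur for `γ, t > 0` by `exists_clm`. -/
noncomputable def SOp (T : ℝ → X →L[ℝ] X) (γ t : ℝ) : X →L[ℝ] X :=
  open Classical in
  if h : ∃ L : X →L[ℝ] X, ∀ y, L y = RLint γ t (fun σ => T σ y) then h.choose else 0

theorem SOp_apply (hα : 1 < α) (hT : IsRLFracCosine α T) {γ t : ℝ} (hγ : 0 < γ) (ht : 0 < t)
    (y : X) : SOp T γ t y = RLint γ t (fun σ => T σ y) := by
  have h := exists_clm hα hT hγ ht
  rw [SOp, dif_pos h]
  exact h.choose_spec y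

/-- The operator `Q(t) = T(t) - (t ^ (α - 2) / Γ(α - 1)) I`. The exponent is written `α - 1 - 1` so that
the scalar has the shape `t ^ (δ - 1) / Γ(δ)`. -/
noncomputable def QOp (α : ℝ) (T : ℝ → X →L[ℝ] X) (t : ℝ) : X →L[ℝ] X :=
  T t - (t ^ (α - 1 - 1) / Real.Gamma (α - 1)) • ContinuousLinearMap.id ℝ X

theorem QOp_apply (t : ℝ) (y : X) :
    QOp α T t y = T t y - (t ^ (α - 1 - 1) / Real.Gamma (α - 1)) • y := rfl

theorem Adm_QOp (hα : 1 < α) (hT : IsRLFracCosine α T) (y : X) : Adm (fun t => QOp α T t y) :=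
  (Adm_orbit hα hT y).sub (Adm.rpow (by linarith) y)

theorem RLint_QOp (hα : 1 < α) (hT : IsRLFracCosine α T) {γ t : ℝ} (hγ : 0 < γ) (ht : 0 < t)
    (y : X) : RLint γ t (fun σ => QOp α T σ y) =
      SOp T γ t y - (t ^ (γ + (α - 1) - 1) / Real.Gamma (γ + (α - 1))) • y := by
  simp only [QOp_apply]
  rw [RLint_sub (Adm_orbit hα hT y) (Adm.rpow (by linarith) y) hγ ht,
    RLint_rpow hγ (by linarith) ht, SOp_apply hα hT hγ ht]

/-- Unintegrated form `Q(a) S_α(b) = S_α(a) Q(b)` of the functional equation. Since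
`J^{2-α} Q = S_{2-α} - I`, the hypothesis `hE` is this identity with `J^{2-α}` applied in both
variables, and these integrals are cancelled one after the other. -/
theorem QOp_SOp (hα : α ∈ Ioo (1:ℝ) 2) (hT : IsRLFracCosine α T)
    (hE : ∀ x, ∀ a > 0, ∀ b > 0, SOp T (2 - α) a (SOp T 2 b x) - SOp T 2 b x =
      SOp T 2 a (SOp T (2 - α) b x) - SOp T 2 a x) (x : X) {a b : ℝ} (ha : 0 < a) (hb : 0 < b) :
    QOp α T a (SOp T α b x) = SOp T α a (QOp α T b x) := by
  have hα1 := hα.1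
  have hα2 := hα.2
  have hβ : 2 - α ∈ Ioo (0:ℝ) 1 := ⟨by linarith, by linarith⟩
  have hJQ : ∀ y : X, ∀ t > 0, RLint (2 - α) t (fun σ => QOp α T σ y) = SOp T (2 - α) t y - y := by
    intro y t ht
    rw [RLint_QOp hα1 hT hβ.1 ht]
    have : 2 - α + (α - 1) = 1 := by ring
    simp [this]
  have I1 : ∀ a > 0, ∀ b > 0, QOp α T a (SOp T 2 b x) =
      SOp T α a (RLint (2 - α) b (fun σ => QOp α T σ x)) := by
    intro a ha b hb
    rw [SOp_apply hα1 hT (by linarith) ha]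
    refine RLint_cancel (Adm_QOp hα1 hT _) (Adm_orbit hα1 hT _) hβ hα1 (fun t ht => ?_) a ha
    rw [hJQ _ t ht, hJQ _ b hb, hE x t ht b hb, sub_add_cancel,
      ← SOp_apply hα1 hT two_pos ht, map_sub]
  have h := RLint_cancel (f := fun s => SOp T α a (QOp α T s x))
    (g := fun s => QOp α T a (T s x)) ((Adm_QOp hα1 hT x).clm _) ((Adm_orbit hα1 hT x).clm _)
    hβ hα1 (fun t ht => ?_) b hb
  · rw [h, RLint_clm (Adm_orbit hα1 hT x) _ (by linarith) hb,
      SOp_apply hα1 hT (by linarith) hb]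
  · rw [RLint_clm (Adm_QOp hα1 hT x) _ hβ.1 ht, ← I1 a ha t ht, sub_add_cancel,
      RLint_clm (Adm_orbit hα1 hT x) _ two_pos ht, SOp_apply hα1 hT two_pos ht]

/-! ### Commutation -/

/-- The identity `Q(a) S_α(b) = S_α(a) Q(b)` integrated to order `γ` in `a` and `δ` in `b`. -/
theorem QOp_SOp_general (hα1 : 1 < α) (hT : IsRLFracCosine α T)
    (hI : ∀ x, ∀ a > 0, ∀ b > 0, QOp α T a (SOp T α b x) = SOp T α a (QOp α T b x))
    (x : X) {γ δ a b : ℝ} (hγ : 0 < γ) (hδ : 0 < δ) (ha : 0 < a) (hb : 0 < b) :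
    SOp T γ a (SOp T (δ + α) b x) -
        (a ^ (γ + (α - 1) - 1) / Real.Gamma (γ + (α - 1))) • SOp T (δ + α) b x =
      SOp T (γ + α) a (SOp T δ b x -
        (b ^ (δ + (α - 1) - 1) / Real.Gamma (δ + (α - 1))) • x) := by
  have hα0 : 0 < α := by linarith
  let q : X →L[ℝ] X := SOp T γ a -
    (a ^ (γ + (α - 1) - 1) / Real.Gamma (γ + (α - 1))) • ContinuousLinearMap.id ℝ X
  have h1 : ∀ b > 0, q (SOp T α b x) = SOp T (γ + α) a (QOp α T b x) := by
    intro b hb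
    have e := RLint_QOp hα1 hT hγ ha (SOp T α b x)
    change _ = q (SOp T α b x) at e
    rw [← e, SOp_apply hα1 hT (add_pos hγ hα0) ha,
      ← RLint_semigroup (Adm_orbit hα1 hT _) hγ hα0 ha]
    refine RLint_congr ha fun s hs => ?_
    rw [hI x s hs b hb, SOp_apply hα1 hT hα0 hs]
  change q (SOp T (δ + α) b x) = _
  rw [← RLint_QOp hα1 hT hδ hb, ← RLint_clm (Adm_QOp hα1 hT x) _ hδ hb,
    SOp_apply hα1 hT (add_pos hδ hα0) hb, ← RLint_clm (Adm_orbit hα1 hT x) _ (add_pos hδ hα0) hb,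
    ← RLint_semigroup ((Adm_orbit hα1 hT x).clm q) hδ hα0 hb]
  refine RLint_congr hb fun s hs => ?_
  rw [← h1 s hs, RLint_clm (Adm_orbit hα1 hT x) _ hα0 hs, SOp_apply hα1 hT hα0 hs]

/-- An order `α` can be moved between the two factors of a commutator:
`[S_{γ+α}(a), S_δ(b)] = [S_γ(a), S_{δ+α}(b)]`. The identity of `QOp_SOp_general` is used for
`(γ, a; δ, b)` and for `(δ, b; γ, a)`; the scalar terms cancel. -/
theorem commutator_shift (hα1 : 1 < α) (hT : IsRLFracCosine α T)
    (hI : ∀ x, ∀ a > 0, ∀ b > 0, QOp α T a (SOp T α b x) = SOp T α a (QOp α T b x))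
    (x : X) {γ δ a b : ℝ} (hγ : 0 < γ) (hδ : 0 < δ) (ha : 0 < a) (hb : 0 < b) :
    SOp T (γ + α) a (SOp T δ b x) - SOp T δ b (SOp T (γ + α) a x) =
      SOp T γ a (SOp T (δ + α) b x) - SOp T (δ + α) b (SOp T γ a x) := by
  have h1 := QOp_SOp_general hα1 hT hI x hγ hδ ha hb
  have h2 := QOp_SOp_general hα1 hT hI x hδ hγ hb ha
  simp only [map_sub, map_smul] at h1 h2
  rw [sub_eq_iff_eq_add] at h1 h2
  rw [h1, h2]
  abel

theorem commutator_iterate (hα1 : 1 < α) (hT : IsRLFracCosine α T)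
    (hI : ∀ x, ∀ a > 0, ∀ b > 0, QOp α T a (SOp T α b x) = SOp T α a (QOp α T b x))
    (x : X) {a b : ℝ} (ha : 0 < a) (hb : 0 < b) (n : ℕ) : ∀ δ > 0,
    SOp T ((n + 1) * α) a (SOp T δ b x) - SOp T δ b (SOp T ((n + 1) * α) a x) =
      SOp T α a (SOp T (δ + n * α) b x) - SOp T (δ + n * α) b (SOp T α a x) := by
  induction n with
  | zero => intro δ _; simp
  | succ n ih =>
    intro δ hδ
    have hα0 : 0 < α := by linarith
    have e1 : ((n + 1 : ℕ) + 1 : ℝ) * α = (n + 1) * α + α := by push_cast; ring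
    have e2 : δ + ((n + 1 : ℕ) : ℝ) * α = (δ + α) + n * α := by push_cast; ring
    rw [e1, e2, commutator_shift hα1 hT hI x (by positivity) hδ ha hb]
    exact ih (δ + α) (by linarith)

/-- `T(σ)` commutes with `S_α(b)`. By `commutator_iterate`, `[S_{(n+1)α}(a), S_α(b)]` equals
`[S_α(a), S_{(n+1)α}(b)]`, whose norm times `Γ((n+1)α)` is at most a constant times `(b ^ α) ^ n`.
The left side is the integral of order `(n+1)α` of `σ ↦ [T(σ), S_α(b)] x` up to an arbitrary `a`, so
`eq_zero_of_RLint_bound` applies. -/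
theorem T_commute_SOp (hα1 : 1 < α) (hT : IsRLFracCosine α T)
    (hI : ∀ x, ∀ a > 0, ∀ b > 0, QOp α T a (SOp T α b x) = SOp T α a (QOp α T b x))
    (x : X) {b : ℝ} (hb : 0 < b) : ∀ σ > 0, T σ (SOp T α b x) = SOp T α b (T σ x) := by
  have hα0 : 0 < α := by linarith
  have hA1 := Adm_orbit hα1 hT (SOp T α b x)
  have hA2 := (Adm_orbit hα1 hT x).clm (SOp T α b)
  suffices h : ∀ σ > 0, T σ (SOp T α b x) - SOp T α b (T σ x) = 0 from
    fun σ hσ => sub_eq_zero.1 (h σ hσ)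
  refine eq_zero_of_RLint_bound (hA1.sub hA2) hα1 hb fun a ha => ?_
  refine ⟨‖SOp T α a‖ * (b ^ (α - 1) * ∫ σ in (0:ℝ)..b, ‖T σ x‖) +
    b ^ (α - 1) * ∫ σ in (0:ℝ)..b, ‖T σ (SOp T α a x)‖, fun n => ?_⟩
  set g : ℝ := (n + 1) * α with hg
  have hn : (0:ℝ) ≤ n * α := by positivity
  have hg1 : 1 ≤ g := by rw [hg, add_mul]; linarith
  have hg0 : 0 < g := by linarith
  have hG := (Real.Gamma_pos_of_pos hg0)
  have e := commutator_iterate hα1 hT hI x ha hb n α hα0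
  have eg : α + n * α = g := by rw [hg]; ring
  rw [eg, ← hg] at e
  have e2 : RLint g a (fun σ => T σ (SOp T α b x) - SOp T α b (T σ x)) =
      SOp T g a (SOp T α b x) - SOp T α b (SOp T g a x) := by
    rw [RLint_sub hA1 hA2 hg0 ha, RLint_clm (Adm_orbit hα1 hT x) _ hg0 ha,
      SOp_apply hα1 hT hg0 ha, SOp_apply hα1 hT hg0 ha]
  have hS : ∀ y, ‖SOp T g b y‖ ≤
      (Real.Gamma g)⁻¹ * ((b ^ α) ^ n * (b ^ (α - 1) * ∫ σ in (0:ℝ)..b, ‖T σ y‖)) := by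
    intro y
    rw [SOp_apply hα1 hT hg0 hb, RLint, norm_smul, Real.norm_of_nonneg (inv_nonneg.2 hG.le)]
    refine mul_le_mul_of_nonneg_left ?_ (inv_nonneg.2 hG.le)
    refine (norm_RLint_le hα1 hT hg1 hb y).trans (le_of_eq ?_)
    rw [← mul_assoc, ← Real.rpow_mul_natCast hb.le, ← Real.rpow_add hb]
    congr 2; rw [hg]; ring
  have e3 : ∫ σ in (0:ℝ)..a, (a - σ) ^ (g - 1) • (T σ (SOp T α b x) - SOp T α b (T σ x)) =
      Real.Gamma g • (SOp T α a (SOp T g b x) - SOp T g b (SOp T α a x)) := by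
    rw [← e, ← e2, RLint, smul_smul, mul_inv_cancel₀ hG.ne', one_smul]
  rw [e3, norm_smul, Real.norm_of_nonneg hG.le]
  have h1 := (SOp T α a).le_opNorm_of_le (hS x)
  have h2 := hS (SOp T α a x)
  calc Real.Gamma g * ‖SOp T α a (SOp T g b x) - SOp T g b (SOp T α a x)‖
      ≤ Real.Gamma g * (‖SOp T α a‖ * ((Real.Gamma g)⁻¹ *
          ((b ^ α) ^ n * (b ^ (α - 1) * ∫ σ in (0:ℝ)..b, ‖T σ x‖))) +
          (Real.Gamma g)⁻¹ * ((b ^ α) ^ n *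
            (b ^ (α - 1) * ∫ σ in (0:ℝ)..b, ‖T σ (SOp T α a x)‖))) :=
        mul_le_mul_of_nonneg_left ((norm_sub_le _ _).trans (add_le_add h1 h2)) hG.le
    _ = _ := by field_simp

/-! ### The integrated functional equation -/

/-- Continuity on the open quadrant together with the bound `O(σ ^ (α - 2) τ ^ (α - 2))` on bounded
parts of it; this is what `(σ, τ) ↦ T σ (T τ x)` satisfies. -/
def Dom (α : ℝ) (p : ℝ × ℝ → X) : Prop :=
  ContinuousOn p (Ioi 0 ×ˢ Ioi 0) ∧ ∀ c : ℝ, ∃ M : ℝ, ∀ σ ∈ Ioc 0 c, ∀ τ ∈ Ioc 0 c,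
    ‖p (σ, τ)‖ ≤ M * (σ ^ (α - 2) * τ ^ (α - 2))

theorem Dom.swap {p : ℝ × ℝ → X} (hp : Dom α p) : Dom α (fun z => p z.swap) := by
  refine ⟨hp.1.comp continuous_swap.continuousOn fun z hz => ⟨hz.2, hz.1⟩, fun c => ?_⟩
  obtain ⟨M, hM⟩ := hp.2 c
  exact ⟨M, fun σ hσ τ hτ => by rw [mul_comm (σ ^ _)]; exact hM τ hτ σ hσ⟩

theorem Dom_orbit (hT : IsRLFracCosine α T) (x : X) :
    Dom α (fun z : ℝ × ℝ => T z.1 (T z.2 x)) := by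
  constructor
  · rintro ⟨σ₀, τ₀⟩ ⟨hσ₀, hτ₀⟩
    have hσ₀' : (0:ℝ) < σ₀ := hσ₀
    refine ContinuousAt.continuousWithinAt ?_
    have h2 : ContinuousAt (fun z : ℝ × ℝ => T z.1 (T τ₀ x)) (σ₀, τ₀) :=
      ContinuousAt.comp (f := Prod.fst) (g := fun s => T s (T τ₀ x))
        ((hT.1 (T τ₀ x)).continuousAt (Ioi_mem_nhds hσ₀)) continuousAt_fst
    have h3 : ContinuousAt (fun z : ℝ × ℝ => T z.2 x) (σ₀, τ₀) :=
      ContinuousAt.comp (f := Prod.snd) (g := fun s => T s x)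
        ((hT.1 x).continuousAt (Ioi_mem_nhds hτ₀)) continuousAt_snd
    obtain ⟨M, hM0, hM⟩ := norm_bound hT (a := σ₀ + 1)
    have h1 : Tendsto (fun z : ℝ × ℝ => T z.1 (T z.2 x - T τ₀ x)) (𝓝 (σ₀, τ₀)) (𝓝 0) := by
      refine squeeze_zero_norm' (a := fun z : ℝ × ℝ => M * z.1 ^ (α - 2) * ‖T z.2 x - T τ₀ x‖) ?_ ?_
      · have : ∀ᶠ z : ℝ × ℝ in 𝓝 (σ₀, τ₀), z.1 ∈ Ioo 0 (σ₀ + 1) :=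
          continuousAt_fst.eventually_mem (Ioo_mem_nhds hσ₀' (by linarith))
        filter_upwards [this] with z hz using hM z.1 ⟨hz.1, hz.2.le⟩ _
      · have h4 : ContinuousAt (fun z : ℝ × ℝ => M * z.1 ^ (α - 2)) (σ₀, τ₀) :=
          continuousAt_const.mul (continuousAt_fst.rpow_const (Or.inl hσ₀'.ne'))
        have h5 : ContinuousAt (fun z : ℝ × ℝ => ‖T z.2 x - T τ₀ x‖) (σ₀, τ₀) :=
          (h3.sub continuousAt_const).norm
        have := h4.tendsto.mul h5.tendsto
        simpa using this
    have h6 := h1.add h2.tendsto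
    rw [zero_add] at h6
    refine h6.congr fun z => ?_
    simp
  · intro c
    obtain ⟨M, hM0, hM⟩ := norm_bound hT (a := c)
    refine ⟨M * M * ‖x‖, fun σ hσ τ hτ => ?_⟩
    have h0 : 0 ≤ M * σ ^ (α - 2) := mul_nonneg hM0 (Real.rpow_nonneg hσ.1.le _)
    refine (hM σ hσ _).trans ((mul_le_mul_of_nonneg_left (hM τ hτ x) h0).trans (le_of_eq ?_))
    ring

/-- Lebesgue measure on `(0, a] × (0, b]`. -/
noncomputable abbrev boxMeasure (a b : ℝ) : Measure (ℝ × ℝ) :=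
  (volume.restrict (Ioc 0 a)).prod (volume.restrict (Ioc 0 b))

theorem boxMeasure_eq (a b : ℝ) :
    boxMeasure a b = (volume : Measure (ℝ × ℝ)).restrict (Ioc 0 a ×ˢ Ioc 0 b) := by
  rw [boxMeasure, Measure.prod_restrict, Measure.volume_eq_prod]

theorem ae_mem_box (a b : ℝ) : ∀ᵐ z ∂boxMeasure a b, z ∈ Ioc 0 a ×ˢ Ioc 0 b := by
  rw [boxMeasure_eq]
  exact ae_restrict_mem (measurableSet_Ioc.prod measurableSet_Ioc)

theorem Dom.aesm {p : ℝ × ℝ → X} (hp : Dom α p) (a b : ℝ) :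
    AEStronglyMeasurable p (boxMeasure a b) := by
  rw [boxMeasure_eq]
  refine (hp.1.mono ?_).aestronglyMeasurable (measurableSet_Ioc.prod measurableSet_Ioc)
  exact prod_mono (fun s hs => hs.1) fun s hs => hs.1

theorem Dom.integrable_mul {p : ℝ × ℝ → X} (hp : Dom α p) {a b : ℝ} {u v : ℝ → ℝ}
    (hu : Measurable u) (hv : Measurable v)
    (hui : IntegrableOn (fun σ => u σ * σ ^ (α - 2)) (Ioc 0 a))
    (hvi : IntegrableOn (fun τ => v τ * τ ^ (α - 2)) (Ioc 0 b)) :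
    Integrable (fun z : ℝ × ℝ => (u z.1 * v z.2) • p z) (boxMeasure a b) := by
  obtain ⟨M, hM⟩ := hp.2 (max a b)
  have h := (Integrable.mul_prod hui hvi).norm.const_mul M
  refine h.mono' ?_ ?_
  · refine AEStronglyMeasurable.smul ?_ (hp.aesm a b)
    exact (by fun_prop : Measurable fun z : ℝ × ℝ => u z.1 * v z.2).aestronglyMeasurable
  · filter_upwards [ae_mem_box a b] with z hz
    have h1 := hM z.1 ⟨hz.1.1, hz.1.2.trans (le_max_left _ _)⟩ z.2
      ⟨hz.2.1, hz.2.2.trans (le_max_right _ _)⟩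
    rw [norm_smul]
    refine (mul_le_mul_of_nonneg_left h1 (norm_nonneg _)).trans (le_of_eq ?_)
    have h2 : 0 ≤ z.1 ^ (α - 2) := Real.rpow_nonneg hz.1.1.le _
    have h3 : 0 ≤ z.2 ^ (α - 2) := Real.rpow_nonneg hz.2.1.le _
    simp only [norm_mul, Real.norm_of_nonneg h2, Real.norm_of_nonneg h3]
    ring

theorem integrableOn_kernel (hα : 1 < α) {γ a : ℝ} (hγ : 0 < γ) (ha : 0 < a) :
    IntegrableOn (fun σ => (a - σ) ^ (γ - 1) * σ ^ (α - 2)) (Ioc 0 a) :=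
  (intervalIntegrable_iff_integrableOn_Ioc_of_le ha.le).1 ((Adm_rpow_scalar hα).kernel hγ ha)

theorem integrableOn_kernel_one (hα : 1 < α) {a : ℝ} (ha : 0 < a) :
    IntegrableOn (fun σ => (1:ℝ) * σ ^ (α - 2)) (Ioc 0 a) := by
  simpa using integrableOn_kernel hα one_pos ha

/-- The kernel of the defining functional equation at times `t, s`. -/
noncomputable def kerK (α t s : ℝ) (z : ℝ × ℝ) : ℝ :=
  (t - z.1) ^ (1 - α) + (s - z.2) ^ (1 - α) - (t + s - z.1 - z.2) ^ (1 - α)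

/-- The integral of `kerK α a s z` over `s` from `z.2` to `b`, see `kerK_integral`. -/
noncomputable def kerH (α a b : ℝ) (z : ℝ × ℝ) : ℝ :=
  (a - z.1) ^ (1 - α) * (b - z.2) + (b - z.2) ^ (2 - α) / (2 - α)
    - (a + b - z.1 - z.2) ^ (2 - α) / (2 - α) + (a - z.1) ^ (2 - α) / (2 - α)

theorem kerK_integral (hα : α ∈ Ioo (1:ℝ) 2) (a b : ℝ) (z : ℝ × ℝ) :
    IntervalIntegrable (fun s => kerK α a s z) volume z.2 b ∧
    ∫ s in z.2..b, kerK α a s z = kerH α a b z := by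
  have hr : -1 < 1 - α := by linarith [hα.2]
  have i1 : IntervalIntegrable (fun s => (s - z.2) ^ (1 - α)) volume z.2 b := by
    have := (intervalIntegral.intervalIntegrable_rpow' (r := 1 - α) (a := 0) (b := b - z.2)
      hr).comp_sub_right z.2
    simpa using this
  have i2 : IntervalIntegrable (fun s => (a + s - z.1 - z.2) ^ (1 - α)) volume z.2 b := by
    have := (intervalIntegral.intervalIntegrable_rpow' (r := 1 - α) (a := a - z.1)
      (b := a + b - z.1 - z.2) hr).comp_sub_right (z.1 + z.2 - a)
    convert this using 1
    · ext s; congr 1; ring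
    · ring
    · ring
  have e1 : ∫ s in z.2..b, (s - z.2) ^ (1 - α) = (b - z.2) ^ (2 - α) / (2 - α) := by
    rw [intervalIntegral.integral_comp_sub_right (fun s => s ^ (1 - α)) z.2,
      integral_rpow (Or.inl hr), sub_self, Real.zero_rpow (by linarith [hα.2])]
    rw [show 1 - α + 1 = 2 - α by ring, sub_zero]
  have e2 : ∫ s in z.2..b, (a + s - z.1 - z.2) ^ (1 - α) =
      (a + b - z.1 - z.2) ^ (2 - α) / (2 - α) - (a - z.1) ^ (2 - α) / (2 - α) := by
    have : ∀ s, (a + s - z.1 - z.2) ^ (1 - α) = (s - (z.1 + z.2 - a)) ^ (1 - α) := by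
      intro s; congr 1; ring
    simp only [this]
    rw [intervalIntegral.integral_comp_sub_right (fun s => s ^ (1 - α)) (z.1 + z.2 - a),
      integral_rpow (Or.inl hr), ← sub_div, show 1 - α + 1 = 2 - α by ring]
    congr 3 <;> ring
  refine ⟨(intervalIntegrable_const.add i1).sub i2, ?_⟩
  unfold kerK
  rw [intervalIntegral.integral_sub (intervalIntegrable_const.add i1) i2,
    intervalIntegral.integral_add intervalIntegrable_const i1, e1, e2,
    intervalIntegral.integral_const, kerH, smul_eq_mul]
  ring

theorem kerK_nonneg (hα : 1 < α) {t s : ℝ} {z : ℝ × ℝ} (h1 : z.1 ≤ t) (h2 : z.2 ≤ s) :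
    0 ≤ kerK α t s z := by
  unfold kerK
  have h3 : 0 ≤ (s - z.2) ^ (1 - α) := Real.rpow_nonneg (by linarith) _
  rcases h1.eq_or_lt with h | h
  · have : t + s - z.1 - z.2 = s - z.2 := by rw [h]; ring
    rw [this, h, sub_self, Real.zero_rpow (by linarith)]
    linarith
  · have := Real.rpow_le_rpow_of_nonpos (x := t - z.1) (y := t + s - z.1 - z.2) (z := 1 - α)
      (by linarith) (by linarith) (by linarith)
    linarith

theorem integral_boxMeasure_Iic (a b s : ℝ) (hs : s ≤ b) (h : ℝ × ℝ → X) :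
    ∫ z, (if z.2 ≤ s then h z else 0) ∂boxMeasure a b = ∫ z, h z ∂boxMeasure a s := by
  have hm : MeasurableSet {z : ℝ × ℝ | z.2 ≤ s} := measurableSet_le measurable_snd measurable_const
  have e : (fun z : ℝ × ℝ => if z.2 ≤ s then h z else 0) = {z : ℝ × ℝ | z.2 ≤ s}.indicator h := by
    ext z; simp [indicator]
  rw [e, integral_indicator hm, boxMeasure_eq, boxMeasure_eq, Measure.restrict_restrict hm]
  congr 2
  ext z
  simp only [mem_inter_iff, mem_ofPred_eq, mem_prod, mem_Ioc]
  constructor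
  · rintro ⟨h1, h2, h3, _⟩; exact ⟨h2, h3, h1⟩
  · rintro ⟨h2, h3, h1⟩; exact ⟨h1, h2, h3, h1.trans hs⟩

theorem Dom.integral_kerK (hα : α ∈ Ioo (1:ℝ) 2) {p : ℝ × ℝ → X} (hp : Dom α p) {a b : ℝ}
    (ha : 0 < a) (hb : 0 < b) :
    Integrable (fun z => kerH α a b z • p z) (boxMeasure a b) ∧
    ∫ s in (0:ℝ)..b, ∫ z, kerK α a s z • p z ∂boxMeasure a s =
      ∫ z, kerH α a b z • p z ∂boxMeasure a b := by
  have hα1 := hα.1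
  have hβ : 0 < 2 - α := by linarith [hα.2]
  let K : ℝ → ℝ × ℝ → ℝ := fun s z => if z.2 ≤ s then kerK α a s z else 0
  have hKm : Measurable (Function.uncurry K) := by
    refine Measurable.ite (measurableSet_le (by fun_prop) (by fun_prop)) ?_ measurable_const
    unfold kerK
    fun_prop
  have hKeq : ∀ z : ℝ × ℝ, (fun s => K s z) = (Ici z.2).indicator (fun s => kerK α a s z) := by
    intro z; ext s; simp [K, indicator]
  have hset : ∀ σ ∈ Ioc 0 b, Ici σ ∩ Ioc 0 b = Icc σ b := by
    intro σ hσ; ext s; simp only [mem_inter_iff, mem_Ici, mem_Ioc, mem_Icc]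
    constructor
    · rintro ⟨h1, _, h3⟩; exact ⟨h1, h3⟩
    · rintro ⟨h1, h3⟩; exact ⟨h1, lt_of_lt_of_le hσ.1 h1, h3⟩
  have hKint : ∀ᵐ z ∂boxMeasure a b, Integrable (fun s => K s z) (volume.restrict (Ioc 0 b)) := by
    filter_upwards [ae_mem_box a b] with z hz
    rw [hKeq, integrable_indicator_iff measurableSet_Ici, IntegrableOn,
      Measure.restrict_restrict measurableSet_Ici, hset _ hz.2]
    exact (intervalIntegrable_iff_integrableOn_Icc_of_le hz.2.2).1 (kerK_integral hα a b z).1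
  have hKval : ∀ᵐ z ∂boxMeasure a b, ∫ s, K s z ∂(volume.restrict (Ioc 0 b)) = kerH α a b z := by
    filter_upwards [ae_mem_box a b] with z hz
    rw [hKeq, integral_indicator measurableSet_Ici, Measure.restrict_restrict measurableSet_Ici,
      hset _ hz.2, ← (kerK_integral hα a b z).2, integral_Icc_eq_integral_Ioc,
      intervalIntegral.integral_of_le hz.2.2]
  have hK0 : ∀ᵐ z ∂boxMeasure a b, ∀ᵐ s ∂(volume.restrict (Ioc 0 b)), 0 ≤ K s z := by
    filter_upwards [ae_mem_box a b] with z hz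
    refine Eventually.of_forall fun s => ?_
    simp only [K]
    split_ifs with h
    · exact kerK_nonneg hα1 hz.1.2 h
    · exact le_rfl
  have hH : Integrable (fun z => kerH α a b z • p z) (boxMeasure a b) := by
    have hk2 : ∀ {c : ℝ}, 0 < c →
        IntegrableOn (fun σ => (c - σ) ^ (2 - α) / (2 - α) * σ ^ (α - 2)) (Ioc 0 c) := by
      intro c hc
      have := (integrableOn_kernel hα1 (γ := 3 - α) (by linarith [hα.2]) hc).div_const (2 - α)
      refine this.congr (Eventually.of_forall fun σ => ?_)
      simp only
      rw [show 3 - α - 1 = 2 - α by ring]; ring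
    have j1 := hp.integrable_mul (a := a) (b := b) (u := fun σ => (a - σ) ^ (1 - α))
      (v := fun τ => b - τ) (by fun_prop) (by fun_prop)
      (by
        have := integrableOn_kernel hα1 hβ ha
        rwa [show 2 - α - 1 = 1 - α by ring] at this)
      (by
        have := integrableOn_kernel hα1 two_pos hb
        norm_num at this
        exact this)
    have j2 := hp.integrable_mul (a := a) (b := b) (u := fun _ => 1)
      (v := fun τ => (b - τ) ^ (2 - α) / (2 - α)) (by fun_prop) (by fun_prop)
      (integrableOn_kernel_one hα1 ha) (hk2 hb)
    have j3 := hp.integrable_mul (a := a) (b := b) (u := fun σ => (a - σ) ^ (2 - α) / (2 - α))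
      (v := fun _ => 1) (by fun_prop) (by fun_prop)
      (hk2 ha) (integrableOn_kernel_one hα1 hb)
    have j0 := hp.integrable_mul (a := a) (b := b) (u := fun _ => 1)
      (v := fun _ => 1) (by fun_prop) (by fun_prop)
      (integrableOn_kernel_one hα1 ha) (integrableOn_kernel_one hα1 hb)
    have j4 : Integrable (fun z : ℝ × ℝ =>
        ((a + b - z.1 - z.2) ^ (2 - α) / (2 - α)) • p z) (boxMeasure a b) := by
      simp only [mul_one, one_smul] at j0
      refine (j0.norm.const_mul ((a + b) ^ (2 - α) / (2 - α))).mono' ?_ ?_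
      · refine AEStronglyMeasurable.smul ?_ (hp.aesm a b)
        exact (by fun_prop : Measurable fun z : ℝ × ℝ =>
          (a + b - z.1 - z.2) ^ (2 - α) / (2 - α)).aestronglyMeasurable
      · filter_upwards [ae_mem_box a b] with z hz
        have h1 := hz.1.1
        have h2 := hz.1.2
        have h3 := hz.2.1
        have h4 := hz.2.2
        have h0 : 0 ≤ (a + b - z.1 - z.2) ^ (2 - α) / (2 - α) :=
          div_nonneg (Real.rpow_nonneg (by linarith) _) hβ.le
        rw [norm_smul, Real.norm_of_nonneg h0]
        refine mul_le_mul_of_nonneg_right ?_ (norm_nonneg _)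
        exact div_le_div_of_nonneg_right
          (Real.rpow_le_rpow (by linarith) (by linarith) hβ.le) hβ.le
    refine (((j1.add j2).sub j4).add j3).congr (Eventually.of_forall fun z => ?_)
    simp only [Pi.add_apply, Pi.sub_apply, kerH, add_smul, sub_smul, one_mul, mul_one]
  have hKp : Integrable (fun z => (∫ s, K s z ∂(volume.restrict (Ioc 0 b))) • p z)
      (boxMeasure a b) := by
    refine hH.congr ?_
    filter_upwards [hKval] with z hz
    rw [hz]
  have key := (integral_kernel_swap (volume.restrict (Ioc 0 b)) (boxMeasure a b) hKm hK0 hKint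
    (hp.aesm a b) hKp).2
  refine ⟨hH, ?_⟩
  rw [intervalIntegral.integral_of_le hb.le]
  calc ∫ s in Ioc 0 b, ∫ z, kerK α a s z • p z ∂boxMeasure a s
      = ∫ s in Ioc 0 b, ∫ z, K s z • p z ∂boxMeasure a b := by
        refine setIntegral_congr_fun measurableSet_Ioc fun s hs => ?_
        rw [← integral_boxMeasure_Iic a b s hs.2]
        refine integral_congr_ae (Eventually.of_forall fun z => ?_)
        simp only [K]
        split_ifs <;> simp
    _ = _ := key
    _ = _ := by
        refine integral_congr_ae ?_
        filter_upwards [hKval] with z hz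
        rw [hz]

theorem integral_box {a b : ℝ} (ha : 0 < a) (hb : 0 < b) {h : ℝ × ℝ → X}
    (hi : Integrable h (boxMeasure a b)) :
    ∫ z, h z ∂boxMeasure a b = ∫ σ in (0:ℝ)..a, ∫ τ in (0:ℝ)..b, h (σ, τ) := by
  rw [integral_prod _ hi, intervalIntegral.integral_of_le ha.le]
  simp only [intervalIntegral.integral_of_le hb.le]

theorem cosine_eq_box (hα : α ∈ Ioo (1:ℝ) 2) (hT : IsRLFracCosine α T) (x : X) {t s : ℝ}
    (ht : 0 < t) (hs : 0 < s) :
    Real.Gamma (2 - α) • (∫ σ in (0:ℝ)..(t + s), T σ x) =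
      ∫ z, kerK α t s z • T z.1 (T z.2 x) ∂boxMeasure t s := by
  have hα1 := hα.1
  have hβ : 0 < 2 - α := by linarith [hα.2]
  have hp := Dom_orbit hT x
  have hk : ∀ {c : ℝ}, 0 < c →
      IntegrableOn (fun σ => (c - σ) ^ (1 - α) * σ ^ (α - 2)) (Ioc 0 c) := by
    intro c hc
    have := integrableOn_kernel hα1 hβ hc
    rwa [show 2 - α - 1 = 1 - α by ring] at this
  have j1 := hp.integrable_mul (u := fun σ => (t - σ) ^ (1 - α)) (v := fun _ => 1)
    (by fun_prop) (by fun_prop) (hk ht) (integrableOn_kernel_one hα1 hs)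
  have j2 := hp.integrable_mul (u := fun _ => 1) (v := fun τ => (s - τ) ^ (1 - α))
    (by fun_prop) (by fun_prop) (integrableOn_kernel_one hα1 ht) (hk hs)
  simp only [one_mul, mul_one] at j1 j2
  have j3 : Integrable (fun z : ℝ × ℝ => (t + s - z.1 - z.2) ^ (1 - α) • T z.1 (T z.2 x))
      (boxMeasure t s) := by
    refine (j1.norm.add j2.norm).mono' ?_ ?_
    · refine AEStronglyMeasurable.smul ?_ (hp.aesm t s)
      exact (by fun_prop : Measurable fun z : ℝ × ℝ =>
        (t + s - z.1 - z.2) ^ (1 - α)).aestronglyMeasurable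
    · filter_upwards [ae_mem_box t s] with z hz
      have h1 := hz.1.2
      have h2 := hz.2.2
      have h3 := kerK_nonneg hα1 h1 h2
      unfold kerK at h3
      have n1 : 0 ≤ (t - z.1) ^ (1 - α) := Real.rpow_nonneg (by linarith) _
      have n2 : 0 ≤ (s - z.2) ^ (1 - α) := Real.rpow_nonneg (by linarith) _
      have n3 : 0 ≤ (t + s - z.1 - z.2) ^ (1 - α) := Real.rpow_nonneg (by linarith) _
      simp only [Pi.add_apply, norm_smul, Real.norm_of_nonneg n1, Real.norm_of_nonneg n2,
        Real.norm_of_nonneg n3]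
      rw [← add_mul]
      exact mul_le_mul_of_nonneg_right (by linarith) (norm_nonneg _)
  have j12 : Integrable (fun z : ℝ × ℝ => (t - z.1) ^ (1 - α) • T z.1 (T z.2 x) +
      (s - z.2) ^ (1 - α) • T z.1 (T z.2 x)) (boxMeasure t s) := j1.add j2
  rw [hT.2.2 x t ht s hs, ← integral_box ht hs j1, ← integral_box ht hs j2,
    ← integral_box ht hs j3, ← integral_add j1 j2, ← integral_sub j12 j3]
  refine integral_congr_ae (Eventually.of_forall fun z => ?_)
  simp only [kerK, add_smul, sub_smul]

/-- The functional equation in the form `(S_{2-α}(a) - I) S_2(b) = S_2(a) (S_{2-α}(b) - I)`.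
Integrating the defining equation at times `(a, s)` over `s ∈ (0, b)` gives
`Γ(2-α) (S_2(a+b) - S_2(a))`, and at times `(t, b)` over `t ∈ (0, a)` it gives
`Γ(2-α) (S_2(a+b) - S_2(b))`. In the difference of the two integrated kernels everything cancels
except the product terms `(a-σ)^{1-α} (b-τ) - (a-σ) (b-τ)^{1-α}`. -/
theorem cosine_integrated (hα : α ∈ Ioo (1:ℝ) 2) (hT : IsRLFracCosine α T) (x : X) {a b : ℝ}
    (ha : 0 < a) (hb : 0 < b) :
    SOp T (2 - α) a (SOp T 2 b x) - SOp T 2 b x =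
      SOp T 2 a (SOp T (2 - α) b x) - SOp T 2 a x := by
  have hα1 := hα.1
  have hβ : 0 < 2 - α := by linarith [hα.2]
  have hΓ := (Real.Gamma_pos_of_pos hβ).ne'
  have hp := Dom_orbit hT x
  have hA := Adm_orbit hα1 hT x
  obtain ⟨hi1, e1⟩ := hp.integral_kerK hα ha hb
  obtain ⟨hi2, e2⟩ := hp.swap.integral_kerK hα hb ha
  have hF : ∀ t > 0, IntervalIntegrable (fun s => ∫ σ in (0:ℝ)..s, T σ x) volume 0 t := by
    intro t ht
    simpa only [RLint_one] using RLint_intervalIntegrable hA one_pos ht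
  have hG : ∀ t > 0, ∫ s in (0:ℝ)..t, ∫ σ in (0:ℝ)..s, T σ x = SOp T 2 t x := by
    intro t ht
    rw [SOp_apply hα1 hT two_pos ht]
    have := RLint_integral hA one_pos ht
    simp only [RLint_one] at this
    rw [this]; norm_num
  have shift : ∀ c > 0, ∀ d > 0, ∫ s in (0:ℝ)..d, ∫ σ in (0:ℝ)..(c + s), T σ x =
      SOp T 2 (c + d) x - SOp T 2 c x := by
    intro c hc d hd
    rw [intervalIntegral.integral_comp_add_left (fun s => ∫ σ in (0:ℝ)..s, T σ x) c, add_zero,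
      ← hG c hc, ← hG (c + d) (by linarith),
      intervalIntegral.integral_interval_sub_left (hF _ (by linarith)) (hF _ hc)]
  have l1 : Real.Gamma (2 - α) • (SOp T 2 (a + b) x - SOp T 2 a x) =
      ∫ z, kerH α a b z • T z.1 (T z.2 x) ∂boxMeasure a b := by
    rw [← e1, ← shift a ha b hb, ← intervalIntegral.integral_smul,
      intervalIntegral.integral_of_le hb.le, intervalIntegral.integral_of_le hb.le]
    exact setIntegral_congr_fun measurableSet_Ioc fun s hs => cosine_eq_box hα hT x ha hs.1
  have l2 : Real.Gamma (2 - α) • (SOp T 2 (a + b) x - SOp T 2 b x) =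
      ∫ z, kerH α b a z.swap • T z.1 (T z.2 x) ∂boxMeasure a b := by
    have e3 := integral_prod_swap (μ := volume.restrict (Ioc 0 b)) (ν := volume.restrict (Ioc 0 a))
      (fun z : ℝ × ℝ => kerH α b a z • T z.2 (T z.1 x))
    simp only [Prod.fst_swap, Prod.snd_swap] at e3 e2
    rw [e3, ← e2, add_comm a b, ← shift b hb a ha, ← intervalIntegral.integral_smul,
      intervalIntegral.integral_of_le ha.le, intervalIntegral.integral_of_le ha.le]
    refine setIntegral_congr_fun measurableSet_Ioc fun t ht => ?_
    have e4 := integral_prod_swap (μ := volume.restrict (Ioc 0 b))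
      (ν := volume.restrict (Ioc 0 t))
      (fun z : ℝ × ℝ => kerK α b t z • T z.2 (T z.1 x))
    rw [← e4, add_comm b t, cosine_eq_box hα hT x ht.1 hb]
    refine integral_congr_ae (Eventually.of_forall fun z => ?_)
    simp only [kerK, Prod.fst_swap, Prod.snd_swap]
    congr 1
    rw [show b + t - z.2 - z.1 = t + b - z.1 - z.2 by ring]; ring
  have hi3 : Integrable (fun z : ℝ × ℝ => kerH α b a z.swap • T z.1 (T z.2 x)) (boxMeasure a b) :=
    hi2.swap
  have prodker : ∀ γ δ : ℝ, 0 < γ → 0 < δ →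
      Integrable (fun z : ℝ × ℝ => ((a - z.1) ^ (γ - 1) * (b - z.2) ^ (δ - 1)) • T z.1 (T z.2 x))
        (boxMeasure a b) ∧
      ∫ z, ((a - z.1) ^ (γ - 1) * (b - z.2) ^ (δ - 1)) • T z.1 (T z.2 x) ∂boxMeasure a b =
        (Real.Gamma γ * Real.Gamma δ) • SOp T γ a (SOp T δ b x) := by
    intro γ δ hγ hδ
    have hi := hp.integrable_mul (a := a) (b := b) (u := fun σ => (a - σ) ^ (γ - 1))
      (v := fun τ => (b - τ) ^ (δ - 1)) (by fun_prop) (by fun_prop)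
      (integrableOn_kernel hα1 hγ ha) (integrableOn_kernel hα1 hδ hb)
    refine ⟨hi, ?_⟩
    have hγ' := (Real.Gamma_pos_of_pos hγ).ne'
    have hδ' := (Real.Gamma_pos_of_pos hδ).ne'
    have inner : ∀ σ, ∫ τ in (0:ℝ)..b, ((a - σ) ^ (γ - 1) * (b - τ) ^ (δ - 1)) • T σ (T τ x) =
        Real.Gamma δ • (a - σ) ^ (γ - 1) • T σ (SOp T δ b x) := by
      intro σ
      rw [SOp_apply hα1 hT hδ hb, RLint, map_smul,
        ← (T σ).intervalIntegral_comp_comm (hA.kernel hδ hb), smul_comm ((a - σ) ^ (γ - 1)),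
        smul_smul, mul_inv_cancel₀ hδ', one_smul, ← intervalIntegral.integral_smul]
      simp only [map_smul, mul_smul]
    rw [integral_box ha hb hi]
    simp only [inner]
    rw [intervalIntegral.integral_smul, SOp_apply hα1 hT hγ ha, RLint, smul_smul]
    congr 1
    field_simp
  obtain ⟨k1, v1⟩ := prodker (2 - α) 2 hβ two_pos
  obtain ⟨k2, v2⟩ := prodker 2 (2 - α) two_pos hβ
  have main : Real.Gamma (2 - α) • (SOp T 2 b x - SOp T 2 a x) =
      Real.Gamma (2 - α) • (SOp T (2 - α) a (SOp T 2 b x) - SOp T 2 a (SOp T (2 - α) b x)) := by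
    have hd : Real.Gamma (2 - α) • (SOp T 2 b x - SOp T 2 a x) =
        Real.Gamma (2 - α) • (SOp T 2 (a + b) x - SOp T 2 a x) -
          Real.Gamma (2 - α) • (SOp T 2 (a + b) x - SOp T 2 b x) := by
      rw [← smul_sub]; congr 1; abel
    rw [hd, l1, l2, ← integral_sub hi1 hi3]
    simp only [Real.Gamma_two, one_mul, mul_one] at v1 v2
    rw [smul_sub, ← v1, ← v2, ← integral_sub k1 k2]
    refine integral_congr_ae (Eventually.of_forall fun z => ?_)
    simp only [← sub_smul]
    congr 1
    simp only [kerH, Prod.fst_swap, Prod.snd_swap]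
    rw [show b + a - z.2 - z.1 = a + b - z.1 - z.2 by ring, show 2 - α - 1 = 1 - α by ring,
      show (2:ℝ) - 1 = 1 by norm_num, Real.rpow_one, Real.rpow_one]
    ring
  have := smul_right_injective X hΓ main
  rw [sub_eq_sub_iff_add_eq_add] at this ⊢
  rw [← this, add_comm]

end Cosine

end Auxiliary

/-- Symmetry identity:
`(T(r) − (r^{α-2}/Γ(α-1))I) J_t^α T(t)x = (T(t) − (t^{α-2}/Γ(α-1))I) J_r^α T(r)x`. -/
theorem rl_frac_cosine_symmetry
    {X : Type*} [NormedAddCommGroup X] [NormedSpace ℝ X] [CompleteSpace X]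
    (α : ℝ) (hα : α ∈ Set.Ioo (1:ℝ) 2) (T : ℝ → X →L[ℝ] X)
    (hT : IsRLFracCosine α T) :
    ∀ x : X, ∀ r > (0:ℝ), ∀ t > (0:ℝ),
      T r (RLint α t (fun σ => T σ x)) -
        (r ^ (α - 2) / Real.Gamma (α - 1)) • RLint α t (fun σ => T σ x) =
      T t (RLint α r (fun σ => T σ x)) -
        (t ^ (α - 2) / Real.Gamma (α - 1)) • RLint α r (fun σ => T σ x) := by
  intro x r hr t ht
  have hα1 := hα.1
  have hα0 : 0 < α := by linarith
  have hI : ∀ x, ∀ a > 0, ∀ b > 0, QOp α T a (SOp T α b x) = SOp T α a (QOp α T b x) :=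
    fun x a ha b hb =>
      QOp_SOp hα hT (fun x a ha b hb => cosine_integrated hα hT x ha hb) x ha hb
  have h := hI x r hr t ht
  rw [QOp_apply, QOp_apply, map_sub, map_smul, ← T_commute_SOp hα1 hT hI x hr t ht,
    SOp_apply hα1 hT hα0 ht, SOp_apply hα1 hT hα0 hr] at h
  rw [show α - 2 = α - 1 - 1 by ring]
  exact h
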